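/- Let k be a field with char(k) ≠ 2 and let α ∈ k×. The field extension k(t)/k(tᵐ + αᵐ t^{−m}) is Galois of degree 2m with Galois group generated by t ↦ ζ_m t and t ↦ α/t, which is dihedral of order 2m (for m ≥ 3), provided k contains a primitive m-th root of unity ζ_m and char(k) ∤ 2m. -/

import Mathlib

namespace DihedralGroup

variable {G : Type*} [Group G] {n : ℕ}

/-- Elements `s` and `t` of a group satisfying the relations of the dihedral group of order `2n`
define a homomorphism sending the rotation `r i` to `s ^ i` and the reflection `sr i` to `t * s ^ i`. -/
theorem exists_hom_of_relations {s t : G} (hs : s ^ n = 1) (ht : t * t = 1)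
    (hst : s * t = t * s⁻¹) :
    ∃ φ : DihedralGroup n →* G,
      (∀ i : ℤ, φ (r i) = s ^ i) ∧ ∀ i : ℤ, φ (sr i) = t * s ^ i := by
  let ρ : ZMod n →+ Additive G :=
    ZMod.lift n ⟨zmultiplesHom (Additive G) (Additive.ofMul s), by
      simp [← ofMul_pow, hs]⟩
  have hρ (i : ℤ) : (ρ i).toMul = s ^ i := by simp [ρ]
  have hρt (i : ℤ) : s ^ i * t = t * s ^ (-i) := by
    have h : SemiconjBy t s⁻¹ s := hst.symm
    simpa [SemiconjBy] using (h.zpow_right i).symm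
  let f : DihedralGroup n → G
    | r i => (ρ i).toMul
    | sr i => t * (ρ i).toMul
  refine ⟨MonoidHom.mk' f ?_, hρ, fun i ↦ congrArg (t * ·) (hρ i)⟩
  rintro (i | i) (j | j) <;>
    obtain ⟨i, rfl⟩ := ZMod.intCast_surjective i <;>
    obtain ⟨j, rfl⟩ := ZMod.intCast_surjective j
  · simp only [r_mul_r, f, ← Int.cast_add, hρ, zpow_add]
  · simp only [r_mul_sr, f, ← Int.cast_sub, hρ]
    rw [← mul_assoc, hρt, mul_assoc, ← zpow_add, neg_add_eq_sub]
  · simp only [sr_mul_r, f, ← Int.cast_add, hρ, zpow_add, mul_assoc]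
  · simp only [sr_mul_sr, f, ← Int.cast_sub, hρ]
    rw [mul_assoc, ← mul_assoc _ t, hρt, mul_assoc, ← mul_assoc t t, ht, one_mul, ← zpow_add,
      neg_add_eq_sub]

theorem closure_r_one_sr_zero :
    Subgroup.closure {(r 1 : DihedralGroup n), sr 0} = ⊤ := by
  have hr (i : ZMod n) : r i ∈ Subgroup.closure {(r 1 : DihedralGroup n), sr 0} := by
    obtain ⟨i, rfl⟩ := ZMod.intCast_surjective i
    rw [← r_one_zpow]
    exact zpow_mem (Subgroup.subset_closure (by simp)) i
  refine eq_top_iff.mpr fun x _ ↦ ?_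
  rcases x with i | i
  · exact hr i
  · simpa using mul_mem (a := sr 0) (Subgroup.subset_closure (by simp)) (hr i)

end DihedralGroup

namespace RatFunc

variable {K L : Type*} [Field K] [Field L] [Algebra K L]

theorem algHom_ext_of_X {f g : RatFunc K →ₐ[K] L} (h : f X = g X) : f = g := by
  have hp : f.comp (IsScalarTower.toAlgHom K (Polynomial K) (RatFunc K)) =
      g.comp (IsScalarTower.toAlgHom K (Polynomial K) (RatFunc K)) :=
    Polynomial.algHom_ext (by simpa using h)
  ext u
  rw [← num_div_denom u, map_div₀, map_div₀]
  exact congrArg₂ (· / ·) (DFunLike.congr_fun hp u.num) (DFunLike.congr_fun hp u.denom)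

theorem algEquiv_ext_of_X {F : IntermediateField K (RatFunc K)}
    {f g : RatFunc K ≃ₐ[F] RatFunc K} (h : f X = g X) : f = g := by
  have := algHom_ext_of_X (f := (f.toAlgHom.restrictScalars K))
    (g := (g.toAlgHom.restrictScalars K)) h
  ext u
  exact DFunLike.congr_fun this u

theorem algHom_C (f : RatFunc K →ₐ[K] RatFunc K) (a : K) : f (C a) = C a := by
  rw [← algebraMap_eq_C]
  exact f.commutes a

theorem algEquiv_C {F : IntermediateField K (RatFunc K)} (f : RatFunc K ≃ₐ[F] RatFunc K) (a : K) :
    f (C a) = C a :=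
  algHom_C (f.toAlgHom.restrictScalars K) a

theorem exists_algHom_X_eq {g : L} (hg : Transcendental K g) :
    ∃ f : RatFunc K →ₐ[K] L, f X = g :=
  ⟨(IntermediateField.val _).comp (algEquivOfTranscendental g hg).toAlgHom, by simp⟩

theorem transcendental_C_mul_X {a : K} (ha : a ≠ 0) : Transcendental K (C a * X : RatFunc K) := by
  intro h
  refine transcendental_X (K := K) ?_
  have := (isAlgebraic_algebraMap (A := RatFunc K) a⁻¹).mul h
  rwa [algebraMap_eq_C, ← mul_assoc, ← map_mul, inv_mul_cancel₀ ha, map_one, one_mul] at this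

theorem transcendental_C_div_X {a : K} (ha : a ≠ 0) : Transcendental K (C a / X : RatFunc K) := by
  intro h
  refine transcendental_C_mul_X (inv_ne_zero ha) ?_
  simpa [div_eq_mul_inv, mul_comm] using h.inv

/-- An invertible `K`-homomorphism `K(X) → K(X)` fixing `g` is an automorphism
over `K(g)`. -/
theorem exists_algEquiv_adjoin {g : RatFunc K} {f f' : RatFunc K →ₐ[K] RatFunc K}
    (h : f (f' X) = X) (h' : f' (f X) = X) (hg : f g = g) :
    ∃ e : RatFunc K ≃ₐ[IntermediateField.adjoin K {g}] RatFunc K, e X = f X := by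
  let e : RatFunc K ≃ₐ[K] RatFunc K :=
    AlgEquiv.ofAlgHom f f' (algHom_ext_of_X h) (algHom_ext_of_X h')
  have he : e ∈ (IntermediateField.adjoin K {g}).fixingSubgroup := by
    rw [← Subgroup.zpowers_le, ← IntermediateField.le_iff_le, IntermediateField.adjoin_simple_le_iff,
      IntermediateField.mem_fixedField_iff]
    intro x hx
    refine (Subgroup.zpowers_le (H := MulAction.stabilizer _ g)).mpr ?_ hx
    exact hg
  exact ⟨IntermediateField.fixingSubgroupEquiv _ ⟨e, he⟩, rfl⟩

theorem C_div_X_ne_X (a : K) : (C a / X : RatFunc K) ≠ X := by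
  intro h
  rw [div_eq_iff X_ne_zero, ← algebraMap_C, ← algebraMap_X, ← map_mul,
    (algebraMap_injective K).eq_iff] at h
  simpa using congrArg Polynomial.natDegree h

/-- `K(X)` has degree at most `2m` over `K(X ^ m + a / X ^ m)`. -/
theorem finite_and_finrank_adjoin_X_pow_add_div_le {m : ℕ} (hm : m ≠ 0) (a : K) :
    FiniteDimensional (IntermediateField.adjoin K {(X ^ m + C a / X ^ m : RatFunc K)})
      (RatFunc K) ∧
    Module.finrank (IntermediateField.adjoin K {(X ^ m + C a / X ^ m : RatFunc K)})
      (RatFunc K) ≤ 2 * m := by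
  set F := IntermediateField.adjoin K {(X ^ m + C a / X ^ m : RatFunc K)}
  let g : F := IntermediateField.AdjoinSimple.gen K _
  have hg : algebraMap F (RatFunc K) g = X ^ m + C a / X ^ m := rfl
  have ha : algebraMap F (RatFunc K) (algebraMap K F a) = C a := rfl
  let q : Polynomial F := .C (algebraMap K F a) - .C g * .X ^ m
  have hq : q.degree < (2 * m : ℕ) := by
    have : q.degree ≤ (m : ℕ) := by
      dsimp only [q]
      compute_degree!
    exact this.trans_lt (by exact_mod_cast (by omega : m < 2 * m))
  let p : Polynomial F := .X ^ (2 * m) + q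
  have hpd : p.natDegree = 2 * m := Polynomial.natDegree_eq_of_degree_eq_some
    ((Polynomial.degree_add_eq_left_of_degree_lt (by simpa using hq)).trans
      (Polynomial.degree_X_pow _))
  have hpm : p.Monic := Polynomial.monic_X_pow_add hq
  have hp0 : Polynomial.aeval (X : RatFunc K) p = 0 := by
    have : (X : RatFunc K) ^ m ≠ 0 := pow_ne_zero _ X_ne_zero
    simp only [p, q, map_add, map_sub, map_mul, map_pow, Polynomial.aeval_X, Polynomial.aeval_C, hg,
      ha]
    field_simp
    ring
  have hint : IsIntegral F (X : RatFunc K) := ⟨p, hpm, hp0⟩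
  have := IntermediateField.adjoin.finiteDimensional hint
  have e := (IntermediateField.adjoinXEquiv F).toLinearEquiv
  refine ⟨e.finiteDimensional, ?_⟩
  rw [← e.finrank_eq, IntermediateField.adjoin.finrank hint, ← hpd]
  exact Polynomial.natDegree_le_of_dvd (minpoly.dvd _ _ hp0) hpm.ne_zero

end RatFunc

open RatFunc in
theorem stmt19 {k : Type*} [Field k] (m : ℕ) (hm : 3 ≤ m) (ζ α : k)
    (hζ : IsPrimitiveRoot ζ m) (hα : α ≠ 0)
    (hchar2 : ringChar k ≠ 2) (hchar : ¬ ringChar k ∣ 2 * m)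
    (F : IntermediateField k (RatFunc k))
    (hF : F = IntermediateField.adjoin k
      {(RatFunc.X ^ m + RatFunc.C (α ^ m) / RatFunc.X ^ m : RatFunc k)}) :
    IsGalois F (RatFunc k) ∧ Module.finrank F (RatFunc k) = 2 * m ∧
    ∃ σ τ : RatFunc k ≃ₐ[F] RatFunc k,
      σ RatFunc.X = RatFunc.C ζ * RatFunc.X ∧
      τ RatFunc.X = RatFunc.C α / RatFunc.X ∧
      (⊤ : Subgroup (RatFunc k ≃ₐ[F] RatFunc k)) = Subgroup.closure {σ, τ} ∧
      Nonempty ((RatFunc k ≃ₐ[F] RatFunc k) ≃* DihedralGroup m) := by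
  have hm0 : m ≠ 0 := by omega
  have : NeZero m := ⟨hm0⟩
  have hζ0 : ζ ≠ 0 := hζ.ne_zero hm0
  have hX : (X : RatFunc k) ≠ 0 := X_ne_zero
  have hCα : (C α : RatFunc k) ≠ 0 := by simpa using hα
  have hCζ : (C ζ : RatFunc k) ^ m = 1 := by rw [← map_pow, hζ.pow_eq_one, map_one]
  have hinv : (C ζ * C ζ⁻¹ : RatFunc k) = 1 := by rw [← map_mul, mul_inv_cancel₀ hζ0, map_one]
  obtain ⟨hfin, hle⟩ := finite_and_finrank_adjoin_X_pow_add_div_le hm0 (α ^ m)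
  obtain ⟨σ, τ, hσ, hτ⟩ : ∃ σ τ : RatFunc k ≃ₐ[F] RatFunc k,
      σ X = C ζ * X ∧ τ X = C α / X := by
    obtain ⟨s, hs⟩ := exists_algHom_X_eq (transcendental_C_mul_X hζ0)
    obtain ⟨s', hs'⟩ := exists_algHom_X_eq (transcendental_C_mul_X (inv_ne_zero hζ0))
    obtain ⟨t, ht⟩ := exists_algHom_X_eq (transcendental_C_div_X hα)
    have htt : t (t X) = X := by
      rw [ht, map_div₀, algHom_C, ht, div_div_cancel₀ hCα]
    obtain ⟨σ, hσ⟩ := exists_algEquiv_adjoin (g := X ^ m + C (α ^ m) / X ^ m) (f := s) (f' := s')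
      (by rw [hs', map_mul, algHom_C, hs, ← mul_assoc, mul_comm (C _), hinv, one_mul])
      (by rw [hs, map_mul, algHom_C, hs', ← mul_assoc, hinv, one_mul])
      (by simp only [map_add, map_div₀, map_pow, algHom_C, hs, mul_pow, hCζ, one_mul])
    obtain ⟨τ, hτ⟩ := exists_algEquiv_adjoin (g := X ^ m + C (α ^ m) / X ^ m) htt htt
      (by
        simp only [map_add, map_div₀, map_pow, algHom_C, ht, div_pow]
        rw [div_div_cancel₀ (pow_ne_zero m hCα), add_comm])
    subst hF
    exact ⟨σ, τ, hσ.trans hs, hτ.trans ht⟩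
  rw [← hF] at hfin hle
  have hσpow (i : ℕ) : (σ ^ i) X = C (ζ ^ i) * X := by
    induction i with
    | zero => simp
    | succ i ih =>
      rw [pow_succ', AlgEquiv.mul_apply, ih, map_mul, algEquiv_C, hσ, pow_succ, map_mul, mul_assoc]
  have hσm : σ ^ m = 1 := algEquiv_ext_of_X <| by
    rw [hσpow, hζ.pow_eq_one, map_one, one_mul, AlgEquiv.one_apply]
  have hττ : τ * τ = 1 := algEquiv_ext_of_X <| by
    rw [AlgEquiv.mul_apply, hτ, map_div₀, algEquiv_C, hτ, div_div_cancel₀ hCα, AlgEquiv.one_apply]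
  have hστ : σ * τ = τ * σ⁻¹ := by
    rw [eq_mul_inv_iff_mul_eq]
    refine algEquiv_ext_of_X ?_
    have hCζ0 : (C ζ : RatFunc k) ≠ 0 := by simpa using hζ0
    simp only [AlgEquiv.mul_apply, hσ, hτ, map_mul, map_div₀, algEquiv_C]
    field_simp
  obtain ⟨φ, hφr, hφsr⟩ := DihedralGroup.exists_hom_of_relations hσm hττ hστ
  have hφ : Function.Injective φ := by
    refine (injective_iff_map_eq_one φ).mpr ?_
    rintro (i | i) hi
    · rw [← ZMod.natCast_zmod_val i, ← Int.cast_natCast, hφr, zpow_natCast] at hi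
      have h := DFunLike.congr_fun hi X
      rw [hσpow, AlgEquiv.one_apply, mul_eq_right₀ hX, ← map_one C, C_injective.eq_iff,
        hζ.pow_eq_one_iff_dvd] at h
      rw [(ZMod.val_eq_zero i).mp (Nat.eq_zero_of_dvd_of_lt h i.val_lt), DihedralGroup.r_zero]
    · rw [← ZMod.natCast_zmod_val i, ← Int.cast_natCast, hφsr, zpow_natCast] at hi
      have h := DFunLike.congr_fun hi X
      rw [AlgEquiv.mul_apply, hσpow, map_mul, algEquiv_C, hτ, mul_div_assoc', ← map_mul] at h
      exact absurd h (C_div_X_ne_X _)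
  have hcard_ge : 2 * m ≤ Nat.card (RatFunc k ≃ₐ[F] RatFunc k) := by
    rw [← DihedralGroup.nat_card]
    exact Nat.card_le_card_of_injective φ hφ
  have hcard_le : Nat.card (RatFunc k ≃ₐ[F] RatFunc k) ≤ Module.finrank F (RatFunc k) := by
    rw [Nat.card_eq_fintype_card]
    exact AlgEquiv.card_le
  have hbij : Function.Bijective φ :=
    (Nat.bijective_iff_injective_and_card φ).mpr
      ⟨hφ, by rw [DihedralGroup.nat_card]; omega⟩
  have hφ1 : φ (.r 1) = σ := by simpa using hφr 1
  have hφ0 : φ (.sr 0) = τ := by simpa using hφsr 0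
  refine ⟨IsGalois.of_card_aut_eq_finrank F _ (by omega), by omega, σ, τ, hσ, hτ, ?_,
    ⟨(MulEquiv.ofBijective φ hbij).symm⟩⟩
  rw [← hφ1, ← hφ0, ← Set.image_pair, ← MonoidHom.map_closure,
    DihedralGroup.closure_r_one_sr_zero, Subgroup.map_top_of_surjective φ hbij.2]
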